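/- Let ξ, η, σ ∈ ℂ with Re(ξ²) > 0, Re(η²) > 0, and |Re σ| < 1/4. Then K₀((ξ² + η²)/4) = (1/(2^{1/2} π i)) ∫_{σ−i∞}^{σ+i∞} Γ(1/4 − s) Γ(1/4 + s) D_{2s−1/2}(ξ) D_{−2s−1/2}(η) ds. (Note that Re((ξ²+η²)/4) > 0, so all functions appearing are in the domains of the stated representations.) -/

import Mathlib

/-- Confluent hypergeometric function of the second kind via its Laplace-transform
representation, valid for `Re a > 0`, `Re z > 0` (principal branch powers). -/
noncomputable def hypU (a b z : ℂ) : ℂ :=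
  (Complex.Gamma a)⁻¹ *
    ∫ t in Set.Ioi (0 : ℝ), Complex.exp (-z * t) * (t : ℂ) ^ (a - 1) * ((1 : ℂ) + t) ^ (b - a - 1)

/-- Parabolic cylinder function `D_ν(z) = 2^{ν/2} e^{-z²/4} U(-ν/2, 1/2, z²/2)`,
valid for `Re ν < 0`, `Re(z²) > 0` (principal branch powers). -/
noncomputable def parD (ν z : ℂ) : ℂ :=
  (2 : ℂ) ^ (ν / 2) * Complex.exp (-z ^ 2 / 4) * hypU (-ν / 2) (1 / 2) (z ^ 2 / 2)

/-- Order-zero modified Bessel function of the second kind,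
`K₀(z) = √π e^{-z} U(1/2, 1, 2z)`, valid for `Re z > 0`. -/
noncomputable def besselK0 (z : ℂ) : ℂ :=
  (Real.sqrt Real.pi : ℂ) * Complex.exp (-z) * hypU (1 / 2) 1 (2 * z)

open MeasureTheory FourierTransform SchwartzMap in
theorem aux_fourier_L2 (f : ℝ → ℂ) (h1 : Integrable f) (h2 : MemLp f 2) :
    ∀ᵐ x, ((𝓕 (h2.toLp f) : Lp (α := ℝ) ℂ 2 volume) : ℝ → ℂ) x = 𝓕 f x := by
  have hcont : Continuous (𝓕 f) :=
    VectorFourier.fourierIntegral_continuous Real.continuous_fourierChar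
      (innerSL ℝ).continuous₂ h1
  apply ae_eq_of_integral_contDiff_smul_eq (μ := (volume : Measure ℝ))
  · exact (Lp.memLp (𝓕 (h2.toLp f) : Lp (α := ℝ) ℂ 2 volume)).locallyIntegrable (by norm_num)
  · exact hcont.locallyIntegrable
  · intro g g_smooth g_cpt
    have hg₁ : HasCompactSupport (Complex.ofRealCLM ∘ g) := g_cpt.comp_left rfl
    have hg₂ : ContDiff ℝ (⊤ : ℕ∞) (Complex.ofRealCLM ∘ g) := by fun_prop
    let φ : 𝓢(ℝ, ℂ) := hg₁.toSchwartzMap hg₂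
    have hφ : ∀ x, φ x = (g x : ℂ) := fun x => by simp [φ]
    have e1 : ∫ x, g x • ((𝓕 (h2.toLp f) : Lp (α := ℝ) ℂ 2 volume) : ℝ → ℂ) x
        = ((𝓕 (h2.toLp f) : Lp (α := ℝ) ℂ 2 volume) : 𝓢'(ℝ, ℂ)) φ := by
      rw [Lp.toTemperedDistribution_apply]
      simp [hφ]
    rw [e1, ← Lp.fourier_toTemperedDistribution_eq, TemperedDistribution.fourier_apply,
      Lp.toTemperedDistribution_apply]
    have e2 : ∫ x, (𝓕 φ) x • ((h2.toLp f : Lp (α := ℝ) ℂ 2 volume) : ℝ → ℂ) x = ∫ x, (𝓕 φ) x • f x := by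
      apply integral_congr_ae
      filter_upwards [h2.coeFn_toLp] with x hx
      rw [hx]
    rw [e2]
    have e3 := VectorFourier.integral_fourierIntegral_smul_eq_flip (μ := volume) (ν := volume)
      (f := (φ : ℝ → ℂ)) (g := f) (L := innerₗ ℝ) Real.continuous_fourierChar
      (innerSL ℝ).continuous₂ φ.integrable h1
    rw [flip_innerₗ] at e3
    refine Eq.trans e3 ?_
    apply integral_congr_ae
    filter_upwards with x
    rw [hφ]
    simp
    left
    rfl

open MeasureTheory FourierTransform ComplexConjugate in
theorem aux_parseval (f g : ℝ → ℂ) (hf1 : Integrable f) (hf2 : MemLp f 2)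
    (hg1 : Integrable g) (hg2 : MemLp g 2) :
    ∫ w, 𝓕 f (-w) * 𝓕 g w = ∫ x, f x * g x := by
  let k : ℝ → ℂ := fun x => conj (f x)
  have hk1 : Integrable k := by
    refine hf1.norm.mono' (Complex.continuous_conj.comp_aestronglyMeasurable hf1.1) ?_
    filter_upwards with x
    simp [k]
  have hk2 : MemLp k 2 := by
    refine hf2.of_le (Complex.continuous_conj.comp_aestronglyMeasurable hf1.1) ?_
    filter_upwards with x
    simp [k]
  have hkF : ∀ w, 𝓕 k w = conj (𝓕 f (-w)) := by
    intro w
    rw [Real.fourier_real_eq_integral_exp_smul, Real.fourier_real_eq_integral_exp_smul,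
      ← integral_conj]
    congr 1
    ext v
    simp [k, ← Complex.exp_conj, Complex.conj_ofNat]
  have h := Lp.inner_fourier_eq (hk2.toLp k) (hg2.toLp g)
  rw [L2.inner_def, L2.inner_def] at h
  calc _ = _ := ?_
    _ = _ := h
    _ = _ := ?_
  · apply integral_congr_ae
    filter_upwards [aux_fourier_L2 k hk1 hk2, aux_fourier_L2 g hg1 hg2] with x h1 h2
    rw [h1, h2, hkF]
    simp [mul_comm]
  · apply integral_congr_ae
    filter_upwards [hk2.coeFn_toLp, hg2.coeFn_toLp] with x h1 h2
    rw [h1, h2]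
    simp [k, mul_comm]

/-- the substitution `t = 1 / (e^p - 1)` -/
noncomputable def auxT (p : ℝ) : ℝ := (Real.exp p - 1)⁻¹

theorem auxT_pos {p : ℝ} (hp : 0 < p) : 0 < auxT p := by
  unfold auxT
  have := Real.add_one_lt_exp hp.ne'
  exact inv_pos.2 (by linarith)

theorem auxT_one_add {p : ℝ} (hp : 0 < p) : auxT p = Real.exp (-p) * (1 + auxT p) := by
  unfold auxT
  have := Real.add_one_lt_exp hp.ne'
  have h : Real.exp p - 1 ≠ 0 := by linarith
  have := (Real.exp_pos p).ne'
  rw [Real.exp_neg]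
  field_simp
  ring

theorem auxT_deriv {p : ℝ} (hp : 0 < p) :
    HasDerivAt auxT (-(auxT p * (1 + auxT p))) p := by
  have := Real.add_one_lt_exp hp.ne'
  have h : Real.exp p - 1 ≠ 0 := by linarith
  have h2 := ((Real.hasDerivAt_exp p).sub_const 1).fun_inv h
  refine h2.congr_deriv ?_
  unfold auxT
  field_simp
  ring

theorem auxT_inj : Set.InjOn auxT (Set.Ioi 0) := by
  intro a _ b _ h
  unfold auxT at h
  have := inv_injective h
  apply Real.exp_injective
  linarith

theorem auxT_image : Set.image auxT (Set.Ioi 0) = Set.Ioi 0 := by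
  ext t
  constructor
  · rintro ⟨p, hp, rfl⟩
    exact auxT_pos hp
  · intro ht
    have ht : 0 < t := ht
    refine ⟨Real.log (1 + t⁻¹), ?_, ?_⟩
    · apply Real.log_pos
      have := inv_pos.2 ht
      linarith
    · unfold auxT
      rw [Real.exp_log (by positivity)]
      simp

/-- the integrand in the new variable -/
noncomputable def auxF (X b a : ℂ) (p : ℝ) : ℂ :=
  Complex.exp (-X * auxT p) * ((1 + auxT p : ℝ) : ℂ) ^ b * Complex.exp (-a * p)

theorem aux_subst (X b a : ℂ) :
    ∫ t in Set.Ioi (0 : ℝ), Complex.exp (-X * t) * (t : ℂ) ^ (a - 1) *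
      ((1 : ℂ) + t) ^ (b - a - 1) = ∫ p in Set.Ioi (0 : ℝ), auxF X b a p := by
  conv_lhs => rw [← auxT_image]
  rw [MeasureTheory.integral_image_eq_integral_abs_deriv_smul measurableSet_Ioi
    (fun p hp => (auxT_deriv hp).hasDerivWithinAt) auxT_inj]
  apply MeasureTheory.setIntegral_congr_fun measurableSet_Ioi
  intro p hp
  have hp : 0 < p := hp
  have hT := auxT_pos hp
  have h1 := auxT_one_add hp
  have hT' : (auxT p : ℂ) ≠ 0 := by exact_mod_cast hT.ne'
  have hS : 0 < 1 + auxT p := by linarith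
  have hS' : (1 + (auxT p : ℂ)) ≠ 0 := by exact_mod_cast hS.ne'
  have key : (auxT p : ℂ) ^ a = Complex.exp (-a * p) * (1 + (auxT p : ℂ)) ^ a := by
    have e : (auxT p : ℂ) = ((Real.exp (-p) : ℝ) : ℂ) * ((1 + auxT p : ℝ) : ℂ) := by
      exact_mod_cast h1
    conv_lhs => rw [e]
    rw [Complex.mul_cpow_ofReal_nonneg (Real.exp_pos _).le hS.le]
    push_cast
    congr 1
    rw [← Complex.ofReal_neg, ← Complex.ofReal_exp,
      Complex.cpow_def_of_ne_zero (by exact_mod_cast (Real.exp_pos _).ne'),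
      ← Complex.ofReal_log (Real.exp_pos _).le, Real.log_exp]
    congr 1
    push_cast
    ring
  simp only [auxF]
  rw [abs_neg, abs_of_pos (by positivity), Complex.real_smul, Complex.cpow_sub _ _ hT',
    Complex.cpow_sub _ _ hS', Complex.cpow_sub _ _ hS', key]
  have h3 : (1 + (auxT p : ℂ)) ^ a ≠ 0 := by
    rw [Complex.cpow_def_of_ne_zero hS']; exact Complex.exp_ne_zero _
  push_cast
  simp only [Complex.cpow_one]
  field_simp

theorem auxF_measurable (X b a : ℂ) : Measurable (auxF X b a) := by
  unfold auxF auxT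
  fun_prop

theorem auxF_bound (X a : ℂ) (hX : 0 < X.re) : ∃ C, ∀ p : ℝ, 0 < p →
    ‖auxF X (1 / 2) a p‖ ≤ C * Real.exp (-a.re * p) := by
  refine ⟨1 + 1 / X.re, fun p hp => ?_⟩
  have hT := auxT_pos hp
  unfold auxF
  rw [norm_mul, norm_mul, Complex.norm_exp, Complex.norm_exp,
    Complex.norm_cpow_eq_rpow_re_of_pos (by linarith)]
  have e1 : (-X * (auxT p : ℂ)).re = -(X.re * auxT p) := by simp
  have e2 : (-a * (p : ℂ)).re = -a.re * p := by simp
  have e3 : ((1 : ℂ) / 2).re = 1 / 2 := by norm_num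
  rw [e1, e2, e3]
  gcongr
  have h1 : (1 + auxT p) ^ (1 / 2 : ℝ) ≤ 1 + auxT p := by
    conv_rhs => rw [← Real.rpow_one (1 + auxT p)]
    exact Real.rpow_le_rpow_of_exponent_le (by linarith) (by norm_num)
  have h2 : Real.exp (-(X.re * auxT p)) ≤ (1 + X.re * auxT p)⁻¹ := by
    rw [Real.exp_neg]
    have := Real.add_one_le_exp (X.re * auxT p)
    have : 0 < X.re * auxT p := by positivity
    gcongr
    linarith
  calc _ ≤ (1 + X.re * auxT p)⁻¹ * (1 + auxT p) := by gcongr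
    _ ≤ _ := by
      rw [inv_mul_le_iff₀ (by positivity)]
      have : (1 + X.re * auxT p) * (1 + 1 / X.re) =
        1 + auxT p + 1 / X.re + X.re * auxT p := by field_simp; ring
      rw [this]
      have : 0 < 1 / X.re + X.re * auxT p := by positivity
      linarith

open MeasureTheory in
theorem auxF_integrable (X a : ℂ) (hX : 0 < X.re) (ha : 0 < a.re) :
    Integrable ((Set.Ioi 0).indicator (auxF X (1 / 2) a)) ∧
    MemLp ((Set.Ioi 0).indicator (auxF X (1 / 2) a)) 2 := by
  obtain ⟨C, hC⟩ := auxF_bound X a hX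
  have hm := auxF_measurable X (1 / 2) a
  have hae : AEStronglyMeasurable ((Set.Ioi 0).indicator (auxF X (1 / 2) a)) volume :=
    (hm.indicator measurableSet_Ioi).aestronglyMeasurable
  constructor
  · rw [integrable_indicator_iff measurableSet_Ioi]
    refine Integrable.mono' ((exp_neg_integrableOn_Ioi 0 ha).const_mul C)
      hm.aestronglyMeasurable ?_
    filter_upwards [ae_restrict_mem measurableSet_Ioi] with p hp
    exact hC p hp
  · rw [memLp_two_iff_integrable_sq_norm hae]
    have : (fun x => ‖(Set.Ioi 0).indicator (auxF X (1 / 2) a) x‖ ^ 2) =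
        (Set.Ioi 0).indicator (fun x => ‖auxF X (1 / 2) a x‖ ^ 2) := by
      ext x
      by_cases hx : x ∈ Set.Ioi (0 : ℝ) <;> simp [Set.indicator, hx]
    rw [this, integrable_indicator_iff measurableSet_Ioi]
    refine Integrable.mono' ((exp_neg_integrableOn_Ioi 0 (b := 2 * a.re)
      (by linarith)).const_mul (C ^ 2)) (hm.norm.pow_const 2).aestronglyMeasurable ?_
    filter_upwards [ae_restrict_mem measurableSet_Ioi] with p hp
    have h := hC p hp
    have e : C ^ 2 * Real.exp (-(2 * a.re) * p) = (C * Real.exp (-a.re * p)) ^ 2 := by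
      rw [mul_pow, ← Real.exp_nat_mul]
      congr 2
      push_cast
      ring
    rw [e, Real.norm_of_nonneg (by positivity)]
    gcongr

open MeasureTheory FourierTransform in
theorem auxF_fourier (X a : ℂ) (w : ℝ) :
    𝓕 ((Set.Ioi 0).indicator (auxF X (1 / 2) a)) w =
      ∫ p in Set.Ioi (0 : ℝ), auxF X (1 / 2) (a + Complex.I * ((2 * Real.pi * w : ℝ) : ℂ)) p := by
  rw [Real.fourier_real_eq_integral_exp_smul, ← integral_indicator measurableSet_Ioi]
  congr 1
  ext v
  by_cases hv : v ∈ Set.Ioi (0 : ℝ)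
  · simp only [Set.indicator_of_mem hv, auxF, smul_eq_mul]
    rw [mul_left_comm, ← Complex.exp_add]
    congr 2
    push_cast
    ring
  · simp [Set.indicator_of_notMem hv]

theorem auxF_mul (X Y a a' : ℂ) (p : ℝ) (hp : 0 < p) :
    auxF X (1 / 2) a p * auxF Y (1 / 2) a' p = auxF (X + Y) 1 (a + a') p := by
  have hT := auxT_pos hp
  have hS : 0 < 1 + auxT p := by linarith
  have hS' : ((1 + auxT p : ℝ) : ℂ) ≠ 0 := by exact_mod_cast hS.ne'
  have e : (1 : ℂ) = 1 / 2 + 1 / 2 := by norm_num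
  unfold auxF
  conv_rhs => rw [e, Complex.cpow_add _ _ hS', neg_add, neg_add, add_mul, add_mul,
    Complex.exp_add, Complex.exp_add]
  ring

open MeasureTheory in
theorem aux_main (X Y σ : ℂ) (hX : 0 < X.re) (hY : 0 < Y.re) (hσ : |σ.re| < 1 / 4) :
    ∫ τ : ℝ, (∫ p in Set.Ioi (0 : ℝ), auxF X (1 / 2) (1 / 4 - (σ + Complex.I * τ)) p) *
      (∫ p in Set.Ioi (0 : ℝ), auxF Y (1 / 2) (1 / 4 + (σ + Complex.I * τ)) p) =
    2 * Real.pi * ∫ p in Set.Ioi (0 : ℝ), auxF (X + Y) 1 (1 / 2) p := by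
  rw [abs_lt] at hσ
  obtain ⟨h1, h2⟩ := auxF_integrable X (1 / 4 - σ) hX (by simp; linarith [hσ.2])
  obtain ⟨h3, h4⟩ := auxF_integrable Y (1 / 4 + σ) hY (by simp; linarith [hσ.1])
  have hP := aux_parseval _ _ h1 h2 h3 h4
  simp only [auxF_fourier] at hP
  have hR := Measure.integral_comp_mul_left (fun τ : ℝ =>
    (∫ p in Set.Ioi (0 : ℝ), auxF X (1 / 2) (1 / 4 - (σ + Complex.I * τ)) p) *
      (∫ p in Set.Ioi (0 : ℝ), auxF Y (1 / 2) (1 / 4 + (σ + Complex.I * τ)) p)) (2 * Real.pi)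
  have e1 : ∫ x : ℝ, (Set.Ioi (0 : ℝ)).indicator (auxF X (1 / 2) (1 / 4 - σ)) x *
      (Set.Ioi (0 : ℝ)).indicator (auxF Y (1 / 2) (1 / 4 + σ)) x =
      ∫ p in Set.Ioi (0 : ℝ), auxF (X + Y) 1 (1 / 2) p := by
    rw [← integral_indicator measurableSet_Ioi]
    congr 1
    ext v
    by_cases hv : v ∈ Set.Ioi (0 : ℝ)
    · simp only [Set.indicator_of_mem hv]
      rw [auxF_mul _ _ _ _ _ hv]
      congr 1
      ring
    · simp [Set.indicator_of_notMem hv]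
  rw [e1] at hP
  rw [← hP]
  have e2 : ∀ w : ℝ, 1 / 4 - σ + Complex.I * ((2 * Real.pi * -w : ℝ) : ℂ) =
      1 / 4 - (σ + Complex.I * ((2 * Real.pi * w : ℝ) : ℂ)) := by
    intro w; push_cast; ring
  have e3 : ∀ w : ℝ, 1 / 4 + σ + Complex.I * ((2 * Real.pi * w : ℝ) : ℂ) =
      1 / 4 + (σ + Complex.I * ((2 * Real.pi * w : ℝ) : ℂ)) := by
    intro w; ring
  simp only [e2, e3]
  rw [hR, abs_of_pos (by positivity), Complex.real_smul]
  have : (Real.pi : ℂ) ≠ 0 := by exact_mod_cast Real.pi_ne_zero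
  push_cast
  field_simp

theorem aux_gamma_mul (a b z : ℂ) (ha : 0 < a.re) :
    Complex.Gamma a * hypU a b z = ∫ p in Set.Ioi (0 : ℝ), auxF z b a p := by
  unfold hypU
  rw [aux_subst, mul_inv_cancel_left₀ (Complex.Gamma_ne_zero_of_re_pos ha)]

/-- Addition theorem for the order-zero modified Bessel function of the second kind. -/
theorem besselK0_addition (ξ η σ : ℂ) (hξ : 0 < (ξ ^ 2).re) (hη : 0 < (η ^ 2).re)
    (hσ : |σ.re| < 1 / 4) :
    besselK0 ((ξ ^ 2 + η ^ 2) / 4) =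
      (1 / ((2 : ℂ) ^ ((1 : ℂ) / 2) * (Real.pi : ℂ) * Complex.I)) *
        (Complex.I * ∫ τ : ℝ,
          Complex.Gamma (1 / 4 - (σ + Complex.I * τ)) *
          Complex.Gamma (1 / 4 + (σ + Complex.I * τ)) *
          parD (2 * (σ + Complex.I * τ) - 1 / 2) ξ *
          parD (-2 * (σ + Complex.I * τ) - 1 / 2) η) := by
  have hX : 0 < (ξ ^ 2 / 2).re := by simpa using hξ
  have hY : 0 < (η ^ 2 / 2).re := by simpa using hη
  have hM := aux_main _ _ σ hX hY hσ
  have hσ' := abs_lt.1 hσ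
  have h2 : (2 : ℂ) ≠ 0 := two_ne_zero
  have hpi : (Real.pi : ℂ) ≠ 0 := by exact_mod_cast Real.pi_ne_zero
  have hpt : ∀ τ : ℝ, Complex.Gamma (1 / 4 - (σ + Complex.I * τ)) *
          Complex.Gamma (1 / 4 + (σ + Complex.I * τ)) *
          parD (2 * (σ + Complex.I * τ) - 1 / 2) ξ *
          parD (-2 * (σ + Complex.I * τ) - 1 / 2) η =
      ((2 : ℂ) ^ (-(1 / 2) : ℂ) * Complex.exp (-(ξ ^ 2 + η ^ 2) / 4)) *
      ((∫ p in Set.Ioi (0 : ℝ), auxF (ξ ^ 2 / 2) (1 / 2) (1 / 4 - (σ + Complex.I * τ)) p) *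
      (∫ p in Set.Ioi (0 : ℝ), auxF (η ^ 2 / 2) (1 / 2) (1 / 4 + (σ + Complex.I * τ)) p)) := by
    intro τ
    set s := σ + Complex.I * τ with hs
    have hre : s.re = σ.re := by simp [hs]
    rw [← aux_gamma_mul _ _ _ (by simp [hre]; linarith [hσ'.2]),
      ← aux_gamma_mul _ _ _ (by simp [hre]; linarith [hσ'.1])]
    unfold parD
    have e1 : -(2 * s - 1 / 2) / 2 = 1 / 4 - s := by ring
    have e2 : -(-2 * s - 1 / 2) / 2 = 1 / 4 + s := by ring
    have e3 : (2 : ℂ) ^ (-(1 / 2) : ℂ) =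
        (2 : ℂ) ^ ((2 * s - 1 / 2) / 2) * (2 : ℂ) ^ ((-2 * s - 1 / 2) / 2) := by
      rw [← Complex.cpow_add _ _ h2]
      congr 1
      ring
    have e4 : Complex.exp (-(ξ ^ 2 + η ^ 2) / 4) =
        Complex.exp (-ξ ^ 2 / 4) * Complex.exp (-η ^ 2 / 4) := by
      rw [← Complex.exp_add]
      congr 1
      ring
    rw [e1, e2, e3, e4]
    ring
  simp only [hpt]
  rw [MeasureTheory.integral_const_mul, hM]
  have hK := aux_gamma_mul (1 / 2) 1 (2 * ((ξ ^ 2 + η ^ 2) / 4)) (by norm_num)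
  have e5 : ξ ^ 2 / 2 + η ^ 2 / 2 = 2 * ((ξ ^ 2 + η ^ 2) / 4) := by ring
  have e6 : Complex.Gamma (1 / 2) = (Real.sqrt Real.pi : ℂ) := by
    rw [Complex.Gamma_one_half_eq, Real.sqrt_eq_rpow, Complex.ofReal_cpow Real.pi_pos.le]
    norm_num
  rw [e5, ← hK, e6, neg_div]
  unfold besselK0
  have e7 : (2 : ℂ) ^ ((1 : ℂ) / 2) * (2 : ℂ) ^ ((1 : ℂ) / 2) = 2 := by
    rw [← Complex.cpow_add _ _ h2]
    norm_num
  rw [Complex.cpow_neg]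
  generalize (2 : ℂ) ^ ((1 : ℂ) / 2) = r at e7 ⊢
  have hr : r ≠ 0 := by
    rintro rfl
    norm_num at e7
  rw [← e7]
  generalize hypU (1 / 2) 1 (r * r * ((ξ ^ 2 + η ^ 2) / 4)) = u
  field_simp
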